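/- arXiv:1408.3351 — 10 statements merged into one kernel-verified Lean document; each statement's English description precedes it below -/
import Mathlib

section
/- Let P be a polyomino and let t ∈ ℤ² be such that P ∩ (P + t) = ∅. Then for every integer c ≠ 0 one has P ∩ (P + c·t) = ∅; equivalently, the translates P + c·t for c ∈ ℤ are pairwise disjoint. -/
/-!
Suppose `P` contains two points differing by a nonzero multiple of `t`, but none differing by `t`.
Among all lattice paths in `P` joining some `x` to some `x + c • t` with `c > 0`, take a shortest
one, `f`, of length `n`. By minimality two points `f r`, `f s` with `r, s < n` never differ by a
nonzero multiple of `t`, and `c ≥ 2`. Extend `f` to an infinite path with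
`g (i + n) = g i + c • t`, and restart it at a point where the height
`t.1 * y - t.2 * x` is maximal. Any difference `g j - g i` equal to `t` would give a difference
`(1 + c * q) • t` on the original path, which is impossible because `c ≥ 2`.

The contradiction is a winding number computation (`no_avoiding_path`). On the triangle
`0 ≤ i ≤ j ≤ n` the map `F (i, j) = g j - g i` avoids `t`, so the image of the boundary of the
triangle has winding number zero about `t`. The diagonal is mapped to `0`; the two other sides are
mapped to `β j = g j - g 0`, which runs from `0` to `c • t` on or below the line `ℝ t`, and to
`c • t - β i`, which runs back from `c • t` to `0` on or above that line. Such a loop winds exactly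
once about `t`. The winding number is computed by counting signed crossings with a vertical ray
going up from `t`; this needs `t.1 > 0`, which is achieved by the symmetries `t ↦ -t` and
`(x, y) ↦ (y, x)`.
-/

/-- Translation of a set of lattice points by a vector `t`. -/
def shiftSet (P : Set (ℤ × ℤ)) (t : ℤ × ℤ) : Set (ℤ × ℤ) := (· + t) '' P

/-- Two lattice points are edge-adjacent if they differ by a unit vector. -/
def EdgeAdjacent (a b : ℤ × ℤ) : Prop := |a.1 - b.1| + |a.2 - b.2| = 1

/-- A polyomino is a finite nonempty subset of `ℤ²` that is connected under
edge-adjacency. -/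
def IsPolyomino (P : Set (ℤ × ℤ)) : Prop :=
  P.Finite ∧ P.Nonempty ∧
    ∀ a ∈ P, ∀ b ∈ P, ∃ n : ℕ, ∃ f : ℕ → ℤ × ℤ,
      f 0 = a ∧ f n = b ∧ (∀ i ≤ n, f i ∈ P) ∧
      ∀ i < n, f (i + 1) - f i ∈
        ({((1 : ℤ), (0 : ℤ)), (-1, 0), (0, 1), (0, -1)} : Set (ℤ × ℤ))

/-- `z'` is obtained from `z` by a unit step in one of the four coordinate directions. -/
def UnitStep (z z' : ℤ × ℤ) : Prop :=
  (z'.1 = z.1 + 1 ∧ z'.2 = z.2) ∨ (z'.1 = z.1 - 1 ∧ z'.2 = z.2) ∨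
    (z'.1 = z.1 ∧ z'.2 = z.2 + 1) ∨ (z'.1 = z.1 ∧ z'.2 = z.2 - 1)

lemma UnitStep.symm {z z' : ℤ × ℤ} (h : UnitStep z z') : UnitStep z' z := by
  unfold UnitStep at *; omega

/-- `f 0, …, f n` is a lattice path with unit steps inside `P`. -/
def IsPathIn (P : Set (ℤ × ℤ)) (n : ℕ) (f : ℕ → ℤ × ℤ) : Prop :=
  (∀ i ≤ n, f i ∈ P) ∧ ∀ i < n, UnitStep (f i) (f (i + 1))

lemma IsPathIn.segment {P : Set (ℤ × ℤ)} {n : ℕ} {f : ℕ → ℤ × ℤ} (h : IsPathIn P n f)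
    {r s : ℕ} (hrs : r ≤ s) (hs : s ≤ n) : IsPathIn P (s - r) (fun i => f (r + i)) :=
  ⟨fun i hi => h.1 _ (by omega), fun i hi => h.2 (r + i) (by omega)⟩

lemma IsPathIn.reverse {P : Set (ℤ × ℤ)} {n : ℕ} {f : ℕ → ℤ × ℤ} (h : IsPathIn P n f) :
    IsPathIn P n (fun i => f (n - i)) := by
  refine ⟨fun i _ => h.1 _ (by omega), fun i hi => ?_⟩
  have h1 := (h.2 (n - (i + 1)) (by omega)).symm
  rwa [show n - (i + 1) + 1 = n - i by omega] at h1

/-! ### Crossing numbers -/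

/-- Signed number of crossings (left to right) of the step from `z` to `z'` with the ray going
vertically upwards from a point just to the right of `T` and just above it. -/
def crossing (T z z' : ℤ × ℤ) : ℤ :=
  if T.2 < z.2 then (if T.1 < z'.1 then 1 else 0) - (if T.1 < z.1 then 1 else 0) else 0

lemma crossing_back (T : ℤ × ℤ) {z z' : ℤ × ℤ} (h : UnitStep z z') :
    crossing T z z' + crossing T z' z = 0 := by
  unfold UnitStep at h
  unfold crossing
  rcases h with h | h | h | h <;> split_ifs <;> omega

/-- The two ways `p → q → s` and `p → r → s` around a (possibly degenerate) unit square have the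
same crossing number about any point `T` that is not a vertex of the square. -/
lemma crossing_square {T p q r s : ℤ × ℤ} (hpq : UnitStep p q) (hpr : UnitStep p r)
    (hs1 : s.1 = q.1 + r.1 - p.1) (hs2 : s.2 = q.2 + r.2 - p.2)
    (hp : p ≠ T) (hq : q ≠ T) (hr : r ≠ T) (hs : s ≠ T) :
    crossing T p q + crossing T q s = crossing T p r + crossing T r s := by
  obtain ⟨T1, T2⟩ := T
  obtain ⟨p1, p2⟩ := p
  obtain ⟨q1, q2⟩ := q
  obtain ⟨r1, r2⟩ := r
  obtain ⟨s1, s2⟩ := s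
  simp only [UnitStep, ne_eq, Prod.mk.injEq] at *
  simp only [crossing]
  rcases hpq with h | h | h | h <;> rcases hpr with h' | h' | h' | h' <;>
    obtain ⟨rfl, rfl⟩ := h <;> obtain ⟨rfl, rfl⟩ := h' <;> subst hs1 <;> subst hs2 <;>
    split_ifs <;> omega

/-- Sweeping one row of squares of the map `(i, j) ↦ g j - g i`. -/
lemma crossing_row {T : ℤ × ℤ} {n : ℕ} {g : ℕ → ℤ × ℤ}
    (hstep : ∀ i < n, UnitStep (g i) (g (i + 1)))
    (havoid : ∀ i ≤ n, ∀ j ≤ n, g j - g i ≠ T) (j : ℕ) (hj : j < n) (i : ℕ) (hi : i ≤ n) :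
    crossing T (g j - g 0) (g (j + 1) - g 0)
      + ∑ k ∈ Finset.range i, crossing T (g (j + 1) - g k) (g (j + 1) - g (k + 1))
    = ∑ k ∈ Finset.range i, crossing T (g j - g k) (g j - g (k + 1))
      + crossing T (g j - g i) (g (j + 1) - g i) := by
  induction i with
  | zero => simp
  | succ i ih =>
    have ih := ih (by omega)
    rw [Finset.sum_range_succ, Finset.sum_range_succ]
    have hi1 := hstep i (by omega)
    have hj1 := hstep j hj
    have := crossing_square (T := T) (p := g j - g i) (q := g (j + 1) - g i)
      (r := g j - g (i + 1)) (s := g (j + 1) - g (i + 1))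
      (by simp only [UnitStep, Prod.fst_sub, Prod.snd_sub] at *; omega)
      (by simp only [UnitStep, Prod.fst_sub, Prod.snd_sub] at *; omega)
      (by simp only [Prod.fst_sub]; ring) (by simp only [Prod.snd_sub]; ring)
      (havoid _ (by omega) _ (by omega)) (havoid _ (by omega) _ (by omega))
      (havoid _ (by omega) _ (by omega)) (havoid _ (by omega) _ (by omega))
    linarith

/-- If `(i, j) ↦ g j - g i` avoids `T`, the image of the boundary of the triangle
`0 ≤ i ≤ j ≤ m` has total crossing number zero; the diagonal is constant and contributes
nothing. -/
lemma crossing_triangle {T : ℤ × ℤ} {n : ℕ} {g : ℕ → ℤ × ℤ}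
    (hstep : ∀ i < n, UnitStep (g i) (g (i + 1)))
    (havoid : ∀ i ≤ n, ∀ j ≤ n, g j - g i ≠ T) (m : ℕ) (hm : m ≤ n) :
    ∑ k ∈ Finset.range m, crossing T (g k - g 0) (g (k + 1) - g 0)
      + ∑ k ∈ Finset.range m, crossing T (g m - g k) (g m - g (k + 1)) = 0 := by
  induction m with
  | zero => simp
  | succ m ih =>
    have ih := ih (by omega)
    have hrow := crossing_row hstep havoid m (by omega) m (by omega)
    have hm1 := hstep m (by omega)
    have hback := crossing_back T (z := g m - g m) (z' := g (m + 1) - g m)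
      (by simp only [UnitStep, Prod.fst_sub, Prod.snd_sub] at *; omega)
    rw [Finset.sum_range_succ, Finset.sum_range_succ]
    rw [sub_self] at hback hrow
    rw [sub_self (g (m + 1))]
    linarith

/-- A path from `g 0` to `g 0 + c • t`, `c ≥ 2`, whose height in the direction orthogonal to `t`
is maximal at its start, contains two points differing by `t`. -/
lemma no_avoiding_path {t : ℤ × ℤ} (ht : 0 < t.1) {c : ℤ} (hc : 2 ≤ c) {n : ℕ}
    {g : ℕ → ℤ × ℤ} (hstep : ∀ i < n, UnitStep (g i) (g (i + 1)))
    (hend : g n = g 0 + c • t)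
    (hmax : ∀ j ≤ n, t.1 * (g j).2 - t.2 * (g j).1 ≤ t.1 * (g 0).2 - t.2 * (g 0).1)
    (havoid : ∀ i ≤ n, ∀ j ≤ n, g j - g i ≠ t) : False := by
  have htri := crossing_triangle hstep havoid n le_rfl
  -- The side `β` lies on or below the line through `t`, so it never meets the upward ray.
  have hV : ∑ k ∈ Finset.range n, crossing t (g k - g 0) (g (k + 1) - g 0) = 0 := by
    refine Finset.sum_eq_zero fun k hk => ?_
    rw [Finset.mem_range] at hk
    have key : ∀ j ≤ n, (g j - g 0).1 = t.1 → (g j - g 0).2 ≤ t.2 := by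
      intro j hj hx
      have h := hmax j hj
      simp only [Prod.fst_sub, Prod.snd_sub] at *
      have hx' : (g j).1 = t.1 + (g 0).1 := by omega
      rw [hx'] at h
      have : t.1 * ((g j).2 - (g 0).2) ≤ t.1 * t.2 := by linarith
      exact le_of_mul_le_mul_left this ht
    have h1 := key k (by omega)
    have h2 := key (k + 1) (by omega)
    have hs := hstep k hk
    simp only [UnitStep, crossing, Prod.fst_sub, Prod.snd_sub] at *
    split_ifs <;> omega
  -- The returning side `c • t - β` lies on or above that line, so it meets the upward ray
  -- whenever it changes sides of the vertical line next to `t`, and the sum telescopes.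
  have hH : ∑ k ∈ Finset.range n, crossing t (g n - g k) (g n - g (k + 1))
      = ∑ k ∈ Finset.range n, ((if t.1 < (g n - g (k + 1)).1 then (1 : ℤ) else 0)
          - (if t.1 < (g n - g k).1 then 1 else 0)) := by
    refine Finset.sum_congr rfl fun k hk => ?_
    rw [Finset.mem_range] at hk
    have key : ∀ j ≤ n, (g n - g j).1 = t.1 → t.2 < (g n - g j).2 := by
      intro j hj hx
      have h := hmax j hj
      have hne := havoid j hj n le_rfl
      have h2 : t.2 ≤ (g n - g j).2 := by
        simp only [hend, Prod.fst_sub, Prod.snd_sub, Prod.fst_add, Prod.snd_add, Prod.smul_fst,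
          Prod.smul_snd, smul_eq_mul] at *
        have hx' : (g j).1 = (g 0).1 + c * t.1 - t.1 := by omega
        rw [hx'] at h
        have : t.1 * t.2 ≤ t.1 * ((g 0).2 + c * t.2 - (g j).2) := by linarith
        exact le_of_mul_le_mul_left this ht
      exact lt_of_le_of_ne h2 fun h3 => hne (Prod.ext hx h3.symm)
    have h1 := key k (by omega)
    have h2 := key (k + 1) (by omega)
    have hs := hstep k hk
    simp only [UnitStep, crossing, Prod.fst_sub, Prod.snd_sub] at *
    split_ifs <;> omega
  rw [hV, hH, Finset.sum_range_sub (fun k => if t.1 < (g n - g k).1 then (1 : ℤ) else 0)] at htri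
  have h0 : t.1 < (g n - g 0).1 := by
    simp only [hend, add_sub_cancel_left, Prod.smul_fst, smul_eq_mul]
    nlinarith
  rw [if_pos h0, sub_self, if_neg (by simpa using ht.le)] at htri
  omega

/-! ### The shortest path between equivalent points -/

/-- The case `t.1 > 0`, for an arbitrary path-connected set. -/
lemma no_chord_of_pos {P : Set (ℤ × ℤ)}
    (hP : ∀ a ∈ P, ∀ b ∈ P, ∃ n f, f 0 = a ∧ f n = b ∧ IsPathIn P n f)
    {t : ℤ × ℤ} (ht : 0 < t.1) (hno : ∀ x ∈ P, x + t ∉ P) {c : ℤ} (hc : 0 < c)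
    {x : ℤ × ℤ} (hx : x ∈ P) : x + c • t ∉ P := by
  classical
  intro hxc
  have hex : ∃ n : ℕ, ∃ c : ℤ, 0 < c ∧ ∃ f, IsPathIn P n f ∧ f n = f 0 + c • t := by
    obtain ⟨n, f, h0, hn, hf⟩ := hP x hx _ hxc
    exact ⟨n, c, hc, f, hf, by rw [hn, h0]⟩
  clear hxc hx hc c x
  obtain ⟨c, hc, f, hf, hfn⟩ := Nat.find_spec hex
  have hmin := fun m (hm : m < Nat.find hex) => Nat.find_min hex hm
  generalize Nat.find hex = n at *
  have hsmul : ∀ k : ℤ, k • t = 0 → k = 0 := by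
    intro k hk
    have := congrArg Prod.fst hk
    simp only [Prod.smul_fst, smul_eq_mul, Prod.fst_zero, mul_eq_zero] at this
    omega
  have hn : 0 < n := by
    rcases Nat.eq_zero_or_pos n with rfl | h
    · have := hsmul c (by simpa using hfn)
      omega
    · exact h
  have hc2 : 2 ≤ c := by
    by_contra h
    obtain rfl : c = 1 := by omega
    refine hno (f 0) (hf.1 0 (by omega)) ?_
    rw [one_smul] at hfn
    exact hfn ▸ hf.1 n le_rfl
  have hlt : ∀ r s : ℕ, r < s → s < n → ∀ k : ℤ, f s = f r + k • t → k = 0 := by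
    intro r s hrs hs k hk
    by_contra hk0
    have hseg := hf.segment hrs.le hs.le
    apply hmin (s - r) (by omega)
    rcases lt_or_gt_of_ne hk0 with hneg | hpos
    · refine ⟨-k, by omega, _, hseg.reverse, ?_⟩
      simp only [Nat.sub_self, Nat.sub_zero, add_zero, Nat.add_sub_cancel' hrs.le, hk, neg_smul]
      abel
    · refine ⟨k, hpos, _, hseg, ?_⟩
      simpa only [add_zero, Nat.add_sub_cancel' hrs.le] using hk
  have hinj : ∀ r s : ℕ, r < n → s < n → ∀ k : ℤ, f s = f r + k • t → k = 0 := by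
    intro r s hr hs k hk
    rcases lt_trichotomy r s with h | h | h
    · exact hlt r s h hs k hk
    · subst h
      exact hsmul k (by simpa using hk)
    · have := hlt s r h hr (-k) (by rw [hk, neg_smul]; abel)
      omega
  -- The infinite path, periodic up to translation by `c • t`.
  let G : ℕ → ℤ × ℤ := fun i => f (i % n) + (((i / n : ℕ) : ℤ) * c) • t
  have hGstep : ∀ i, UnitStep (G i) (G (i + 1)) := by
    intro i
    have hlt' := Nat.mod_lt i hn
    have hs := hf.2 (i % n) hlt'
    have hG1 : G (i + 1) = f (i % n + 1) + (((i / n : ℕ) : ℤ) * c) • t := by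
      simp only [G]
      by_cases hcase : i % n + 1 = n
      · have hi : i + 1 = n * (i / n + 1) := by
          have := Nat.div_add_mod i n
          rw [Nat.mul_add, mul_one]; omega
        rw [hi, Nat.mul_mod_right, Nat.mul_div_cancel_left _ hn, hcase, hfn]
        push_cast
        rw [add_mul, add_smul, one_mul]
        abel
      · have hi : i + 1 = (i % n + 1) + n * (i / n) := by
          have := Nat.div_add_mod i n
          omega
        have hl : i % n + 1 < n := by omega
        have e1 : (i + 1) % n = i % n + 1 := by
          conv_lhs => rw [hi]
          rw [Nat.add_mul_mod_self_left, Nat.mod_eq_of_lt hl]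
        have e2 : (i + 1) / n = i / n := by
          conv_lhs => rw [hi]
          rw [Nat.add_mul_div_left _ _ hn, Nat.div_eq_of_lt hl, zero_add]
        rw [e1, e2]
    rw [hG1]
    simp only [G, UnitStep, Prod.fst_add, Prod.snd_add] at *
    omega
  obtain ⟨m, hm, hmmax⟩ := Finset.exists_max_image (Finset.range n)
    (fun i => t.1 * (f i).2 - t.2 * (f i).1) ⟨0, Finset.mem_range.2 hn⟩
  rw [Finset.mem_range] at hm
  have hheight : ∀ i, t.1 * (G i).2 - t.2 * (G i).1
      = t.1 * (f (i % n)).2 - t.2 * (f (i % n)).1 := by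
    intro i
    simp only [G, Prod.fst_add, Prod.snd_add, Prod.smul_fst, Prod.smul_snd, smul_eq_mul]
    ring
  refine no_avoiding_path ht hc2 (n := n) (g := fun j => G (m + j)) (fun i _ => hGstep (m + i))
    ?_ ?_ ?_
  · simp only [G, Nat.add_mod_right, Nat.add_div_right _ hn, add_zero]
    push_cast
    rw [add_mul, add_smul, one_mul]
    abel
  · intro j _
    simp only [hheight, add_zero, Nat.mod_eq_of_lt hm]
    exact hmmax _ (Finset.mem_range.2 (Nat.mod_lt _ hn))
  · intro i _ j _ h
    set q : ℤ := (((m + i) / n : ℕ) : ℤ) - (((m + j) / n : ℕ) : ℤ) with hq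
    have := hinj ((m + i) % n) ((m + j) % n) (Nat.mod_lt _ hn) (Nat.mod_lt _ hn) (1 + q * c) (by
      simp only [G] at h
      rw [sub_eq_iff_eq_add] at h
      rw [eq_sub_of_add_eq h, hq]
      module)
    have hdvd : c ∣ 1 := ⟨-q, by linarith⟩
    have := Int.le_of_dvd one_pos hdvd
    omega

lemma no_chord_of_ne_zero {P : Set (ℤ × ℤ)}
    (hP : ∀ a ∈ P, ∀ b ∈ P, ∃ n f, f 0 = a ∧ f n = b ∧ IsPathIn P n f)
    {t : ℤ × ℤ} (ht : t.1 ≠ 0) (hno : ∀ x ∈ P, x + t ∉ P) {c : ℤ} (hc : 0 < c)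
    {x : ℤ × ℤ} (hx : x ∈ P) : x + c • t ∉ P := by
  rcases lt_or_gt_of_ne ht with h | h
  · intro hxc
    refine no_chord_of_pos hP (t := -t) (by simpa using h) ?_ hc hxc ?_
    · intro y hy hyt
      exact hno _ hyt (by simpa using hy)
    · simpa using hx
  · exact no_chord_of_pos hP h hno hc hx

lemma no_chord {P : Set (ℤ × ℤ)}
    (hP : ∀ a ∈ P, ∀ b ∈ P, ∃ n f, f 0 = a ∧ f n = b ∧ IsPathIn P n f)
    {t : ℤ × ℤ} (hno : ∀ x ∈ P, x + t ∉ P) {c : ℤ} (hc : 0 < c)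
    {x : ℤ × ℤ} (hx : x ∈ P) : x + c • t ∉ P := by
  by_cases h1 : t.1 = 0
  · have h2 : t.2 ≠ 0 := by
      intro h2
      apply hno x hx
      rw [show t = 0 from Prod.ext h1 h2, add_zero]
      exact hx
    have hswap : ∀ a b : ℤ × ℤ, (a + b).swap = a.swap + b.swap := fun _ _ => rfl
    have key := no_chord_of_ne_zero (P := Prod.swap ⁻¹' P) ?_ (t := t.swap) h2 ?_ hc
      (x := x.swap) (by simpa using hx)
    · exact key
    · intro a ha b hb
      obtain ⟨n, f, h0, hn, hf⟩ := hP _ ha _ hb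
      refine ⟨n, fun i => (f i).swap, by simp [h0], by simp [hn], ?_, ?_⟩
      · intro i hi
        simpa using hf.1 i hi
      · intro i hi
        have := hf.2 i hi
        simp only [UnitStep, Prod.fst_swap, Prod.snd_swap] at *
        omega
    · intro y hy hyt
      exact hno _ hy (by simpa [hswap] using hyt)
  · exact no_chord_of_ne_zero hP h1 hno hc hx

theorem polyomino_translate_iterate_disjoint
    (P : Set (ℤ × ℤ)) (hP : IsPolyomino P) (t : ℤ × ℤ)
    (hdisj : P ∩ shiftSet P t = ∅) :
    (∀ c : ℤ, c ≠ 0 → P ∩ shiftSet P (c • t) = ∅) ∧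
      ∀ c d : ℤ, c ≠ d → shiftSet P (c • t) ∩ shiftSet P (d • t) = ∅ := by
  have hpath : ∀ a ∈ P, ∀ b ∈ P, ∃ n f, f 0 = a ∧ f n = b ∧ IsPathIn P n f := by
    intro a ha b hb
    obtain ⟨n, f, h0, hn, hmem, hstep⟩ := hP.2.2 a ha b hb
    refine ⟨n, f, h0, hn, hmem, fun i hi => ?_⟩
    have := hstep i hi
    simp only [Set.mem_insert_iff, Set.mem_singleton_iff, Prod.ext_iff, Prod.fst_sub,
      Prod.snd_sub] at this
    unfold UnitStep
    omega
  have hno : ∀ x ∈ P, x + t ∉ P := by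
    intro x hx hxt
    have : x + t ∈ P ∩ shiftSet P t := ⟨hxt, x, hx, rfl⟩
    rw [hdisj] at this
    exact this
  have key : ∀ c : ℤ, c ≠ 0 → ∀ x ∈ P, x + c • t ∉ P := by
    intro c hc x hx hxc
    rcases lt_or_gt_of_ne hc with h | h
    · exact no_chord hpath hno (c := -c) (by omega) hxc (by simpa using hx)
    · exact no_chord hpath hno h hx hxc
  constructor
  · intro c hc
    rw [Set.eq_empty_iff_forall_notMem]
    rintro _ ⟨hy, x, hx, rfl⟩
    exact key c hc x hx hy
  · intro c d hcd
    rw [Set.eq_empty_iff_forall_notMem]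
    rintro _ ⟨⟨x, hx, rfl⟩, y, hy, hxy⟩
    refine key (d - c) (by omega) y hy ?_
    have hyx : y + d • t = x + c • t := hxy
    have : y + (d - c) • t = x := by
      rw [sub_smul, ← add_sub_assoc, hyx, add_sub_cancel_right]
    rwa [this]
end

section
/- Let P be a polyomino, and let p = (p₁,p₂), q = (q₁,q₂) ∈ P be pixels such that p₁ is the minimal first coordinate and q₁ is the maximal first coordinate among pixels of P. Set v = (q₁ − p₁ + 1, q₂ − p₂). Then the translates P + i·v for i ∈ ℤ are pairwise disjoint, and for every i ∈ ℤ the translates P + i·v and P + (i+1)·v are edge-adjacent; specifically, q + i·v ∈ P + i·v and q + i·v + (1,0) = p + (i+1)·v ∈ P + (i+1)·v. -/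
theorem polyomino_horizontal_chain
    (P : Set (ℤ × ℤ)) (hP : IsPolyomino P)
    (p q : ℤ × ℤ) (hp : p ∈ P) (hq : q ∈ P)
    (hpmin : ∀ a ∈ P, p.1 ≤ a.1) (hqmax : ∀ a ∈ P, a.1 ≤ q.1)
    (v : ℤ × ℤ) (hv : v = (q.1 - p.1 + 1, q.2 - p.2)) :
    (∀ i j : ℤ, i ≠ j → shiftSet P (i • v) ∩ shiftSet P (j • v) = ∅) ∧
      ∀ i : ℤ,
        q + i • v ∈ shiftSet P (i • v) ∧
        q + i • v + (1, 0) = p + (i + 1) • v ∧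
        p + (i + 1) • v ∈ shiftSet P ((i + 1) • v) := by
  subst hv
  refine ⟨?_, fun i => ⟨⟨q, hq, rfl⟩, ?_, ⟨p, hp, rfl⟩⟩⟩
  · intro i j hij
    rw [Set.eq_empty_iff_forall_notMem]
    rintro x ⟨⟨a, ha, rfl⟩, ⟨b, hb, hab⟩⟩
    have h1 := congrArg Prod.fst hab
    simp only [Prod.fst_add, Prod.smul_fst, smul_eq_mul] at h1
    have ha1 := hpmin a ha
    have ha2 := hqmax a ha
    have hb1 := hpmin b hb
    have hb2 := hqmax b hb
    -- The first coordinates of `a` and `b` differ by `(i - j) * (q.1 - p.1 + 1)`, which is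
    -- too large since `i ≠ j` and both lie in `[p.1, q.1]`.
    rcases lt_or_gt_of_ne hij with h | h <;> nlinarith
  · ext <;> simp <;> ring
end

section
/- Let P be a polyomino and let d = max{ y₁ − y₀ : (x,y₀) ∈ P and (x,y₁) ∈ P } be the largest difference between the second coordinates of two pixels of P lying in the same column. Set w = (0, d + 1). Then the translates P + j·w for j ∈ ℤ are pairwise disjoint, and there exists a ∈ P with a + (0,1) ∈ P + w; hence for every j ∈ ℤ the translates P + j·w and P + (j+1)·w are edge-adjacent. -/
theorem polyomino_vertical_chain
    (P : Set (ℤ × ℤ)) (hP : IsPolyomino P)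
    (d : ℤ)
    (hd_ub : ∀ x y₀ y₁ : ℤ, (x, y₀) ∈ P → (x, y₁) ∈ P → y₁ - y₀ ≤ d)
    (hd_mem : ∃ x y₀ y₁ : ℤ, (x, y₀) ∈ P ∧ (x, y₁) ∈ P ∧ y₁ - y₀ = d)
    (w : ℤ × ℤ) (hw : w = (0, d + 1)) :
    (∀ i j : ℤ, i ≠ j → shiftSet P (i • w) ∩ shiftSet P (j • w) = ∅) ∧
      (∃ a ∈ P, a + (0, 1) ∈ shiftSet P w) ∧
      ∀ j : ℤ, ∃ a ∈ shiftSet P (j • w), ∃ b ∈ shiftSet P ((j + 1) • w),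
        EdgeAdjacent a b := by
  subst hw
  obtain ⟨x, y₀, y₁, h₀, h₁, hd⟩ := hd_mem
  have d_nonneg : 0 ≤ d := by simpa using hd_ub x y₀ y₀ h₀ h₀
  refine ⟨fun i j hij => ?_, ⟨(x, y₁), h₁, (x, y₀), h₀, ?_⟩, fun j =>
    ⟨_, ⟨(x, y₁), h₁, rfl⟩, _, ⟨(x, y₀), h₀, rfl⟩, ?_⟩⟩
  · refine Set.eq_empty_of_forall_notMem ?_
    rintro p ⟨⟨⟨a, b⟩, hab, rfl⟩, ⟨a', b'⟩, hab', h⟩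
    simp only [Prod.smul_mk, Prod.mk_add_mk, smul_eq_mul, mul_zero, add_zero,
      Prod.mk.injEq] at h
    obtain ⟨rfl, h⟩ := h
    have le₁ := hd_ub _ _ _ hab hab'
    have le₂ := hd_ub _ _ _ hab' hab
    rcases lt_or_gt_of_ne hij with hlt | hlt
    · nlinarith
    · nlinarith
  · ext
    · simp
    · simp only [Prod.mk_add_mk]
      lia
  · have h : y₁ + j * (d + 1) - (y₀ + (j + 1) * (d + 1)) = -1 := by linear_combination hd
    simp [EdgeAdjacent, h]
end

section
/- Let P be a polyomino. Let p = (p₁,p₂), q = (q₁,q₂) ∈ P be pixels with p₁ minimal and q₁ maximal among first coordinates of pixels of P, and set v = (q₁ − p₁ + 1, q₂ − p₂). Let d = max{ y₁ − y₀ : (x,y₀) ∈ P and (x,y₁) ∈ P } and set w = (0, d + 1). Then the translates P + i·v + j·w, for (i,j) ranging over ℤ × ℤ, are pairwise disjoint: for all (i,j) ≠ (k,l) in ℤ × ℤ, (P + i·v + j·w) ∩ (P + k·v + l·w) = ∅. -/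
/-!
Every pixel of `P` lies in a column between `p.1` and `q.1`, and `v` moves columns by the number
`q.1 - p.1 + 1` of columns in this strip, so translates with different multiples of `v` occupy
disjoint sets of columns. When the multiples of `v` agree, two translates differ by a multiple of
the vertical vector `w`, of length `d + 1`, whereas two pixels of `P` in one column are at most `d`
apart. Both steps are instances of `eq_of_add_mul_eq`.
-/

/-- Uniqueness of quotient and remainder: if `x` and `y` are less than `A` apart, then
translates of `x` and `y` by multiples of `A` coincide only for equal multiples. -/
theorem eq_of_add_mul_eq {x y i k A : ℤ} (h₁ : x - y < A) (h₂ : y - x < A)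
    (h : x + i * A = y + k * A) : i = k := by
  have hdvd : A ∣ x - y := ⟨k - i, by linear_combination h⟩
  have hxy : x - y = 0 := Int.eq_zero_of_abs_lt_dvd hdvd (abs_lt.mpr ⟨by omega, h₁⟩)
  have hA : A ≠ 0 := by omega
  exact mul_right_cancel₀ hA (by linarith)


theorem polyomino_grid_disjoint
    (P : Set (ℤ × ℤ)) (hP : IsPolyomino P)
    (p q : ℤ × ℤ) (hp : p ∈ P) (hq : q ∈ P)
    (hpmin : ∀ a ∈ P, p.1 ≤ a.1) (hqmax : ∀ a ∈ P, a.1 ≤ q.1)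
    (v : ℤ × ℤ) (hv : v = (q.1 - p.1 + 1, q.2 - p.2))
    (d : ℤ)
    (hd_ub : ∀ x y₀ y₁ : ℤ, (x, y₀) ∈ P → (x, y₁) ∈ P → y₁ - y₀ ≤ d)
    (hd_mem : ∃ x y₀ y₁ : ℤ, (x, y₀) ∈ P ∧ (x, y₁) ∈ P ∧ y₁ - y₀ = d)
    (w : ℤ × ℤ) (hw : w = (0, d + 1)) :
    ∀ i j k l : ℤ, (i, j) ≠ (k, l) →
      shiftSet P (i • v + j • w) ∩ shiftSet P (k • v + l • w) = ∅ := by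
  intro i j k l hne
  rw [Set.eq_empty_iff_forall_notMem]
  rintro z ⟨⟨a, ha, rfl⟩, ⟨b, hb, hab⟩⟩
  subst hv hw
  obtain ⟨a₁, a₂⟩ := a
  obtain ⟨b₁, b₂⟩ := b
  simp only [Prod.smul_mk, Prod.mk_add_mk, Prod.mk.injEq, smul_eq_mul, mul_zero, add_zero] at hab
  obtain ⟨h₁, h₂⟩ := hab
  have hpa := hpmin _ ha
  have hqa := hqmax _ ha
  have hpb := hpmin _ hb
  have hqb := hqmax _ hb
  simp only at hpa hqa hpb hqb
  obtain rfl : i = k := eq_of_add_mul_eq (by omega) (by omega) h₁.symm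
  obtain rfl : a₁ = b₁ := by linarith
  have hab := hd_ub _ _ _ ha hb
  have hba := hd_ub _ _ _ hb ha
  exact hne (by rw [eq_of_add_mul_eq (x := a₂) (y := b₂) (i := j) (k := l) (A := d + 1)
    (by omega) (by omega) (by linarith)])
end

section
/- Let P be a polyomino. Let p = (p₁,p₂), q = (q₁,q₂) ∈ P be pixels with p₁ minimal and q₁ maximal among first coordinates of pixels of P, and set v = (q₁ − p₁ + 1, q₂ − p₂). Let d = max{ y₁ − y₀ : (x,y₀) ∈ P and (x,y₁) ∈ P } and set w = (0, d + 1). Then any two grid-neighboring translates of P are edge-adjacent: for all (i,j), (k,l) ∈ ℤ × ℤ with either (i = k and |j − l| = 1) or (j = l and |i − k| = 1), there exist a ∈ P + i·v + j·w and b ∈ P + k·v + l·w with |a₁ − b₁| + |a₂ − b₂| = 1. -/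
theorem polyomino_grid_neighbors_adjacent
    (P : Set (ℤ × ℤ)) (hP : IsPolyomino P)
    (p q : ℤ × ℤ) (hp : p ∈ P) (hq : q ∈ P)
    (hpmin : ∀ a ∈ P, p.1 ≤ a.1) (hqmax : ∀ a ∈ P, a.1 ≤ q.1)
    (v : ℤ × ℤ) (hv : v = (q.1 - p.1 + 1, q.2 - p.2))
    (d : ℤ)
    (hd_ub : ∀ x y₀ y₁ : ℤ, (x, y₀) ∈ P → (x, y₁) ∈ P → y₁ - y₀ ≤ d)
    (hd_mem : ∃ x y₀ y₁ : ℤ, (x, y₀) ∈ P ∧ (x, y₁) ∈ P ∧ y₁ - y₀ = d)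
    (w : ℤ × ℤ) (hw : w = (0, d + 1)) :
    ∀ i j k l : ℤ, ((i = k ∧ |j - l| = 1) ∨ (j = l ∧ |i - k| = 1)) →
      ∃ a ∈ shiftSet P (i • v + j • w), ∃ b ∈ shiftSet P (k • v + l • w),
        EdgeAdjacent a b := by
  obtain ⟨x, y₀, y₁, h₀, h₁, hd⟩ := hd_mem
  subst hv hw
  have key : ∀ a b : ℤ × ℤ, (a.1 - b.1 = 0 ∧ |a.2 - b.2| = 1) ∨
      (|a.1 - b.1| = 1 ∧ a.2 - b.2 = 0) → EdgeAdjacent a b := by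
    rintro a b (⟨h, h'⟩ | ⟨h, h'⟩) <;> simp [EdgeAdjacent, h, h']
  rintro i j k l (⟨rfl, h⟩ | ⟨rfl, h⟩) <;> rcases (abs_eq zero_le_one).1 h with h | h
  · refine ⟨_, ⟨_, h₀, rfl⟩, _, ⟨_, h₁, rfl⟩, key _ _ (.inl ⟨?_, (abs_eq zero_le_one).2 (.inl ?_)⟩)⟩ <;>
      simp only [Prod.fst_add, Prod.snd_add, Prod.smul_fst, Prod.smul_snd, smul_eq_mul]
    · ring
    · linear_combination (d + 1) * h - hd
  · refine ⟨_, ⟨_, h₁, rfl⟩, _, ⟨_, h₀, rfl⟩, key _ _ (.inl ⟨?_, (abs_eq zero_le_one).2 (.inr ?_)⟩)⟩ <;>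
      simp only [Prod.fst_add, Prod.snd_add, Prod.smul_fst, Prod.smul_snd, smul_eq_mul]
    · ring
    · linear_combination (d + 1) * h + hd
  · refine ⟨_, ⟨_, hp, rfl⟩, _, ⟨_, hq, rfl⟩, key _ _ (.inr ⟨(abs_eq zero_le_one).2 (.inl ?_), ?_⟩)⟩ <;>
      simp only [Prod.fst_add, Prod.snd_add, Prod.smul_fst, Prod.smul_snd, smul_eq_mul]
    · linear_combination (q.1 - p.1 + 1) * h
    · linear_combination (q.2 - p.2) * h
  · refine ⟨_, ⟨_, hq, rfl⟩, _, ⟨_, hp, rfl⟩, key _ _ (.inr ⟨(abs_eq zero_le_one).2 (.inr ?_), ?_⟩)⟩ <;>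
      simp only [Prod.fst_add, Prod.snd_add, Prod.smul_fst, Prod.smul_snd, smul_eq_mul]
    · linear_combination (q.1 - p.1 + 1) * h
    · linear_combination (q.2 - p.2) * h
end

section
/- For every polyomino P there exist ℤ-linearly independent vectors v, w ∈ ℤ² such that: (1) the translates P + i·v + j·w for (i,j) ∈ ℤ × ℤ are pairwise disjoint, and (2) any two grid-neighboring translates are edge-adjacent, i.e., whenever (i = k and |j − l| = 1) or (j = l and |i − k| = 1), there exist a ∈ P + i·v + j·w and b ∈ P + k·v + l·w with |a₁ − b₁| + |a₂ − b₂| = 1. -/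
lemma exists_greatest {A : Set ℤ} (M : ℤ) (hM : ∀ x ∈ A, x ≤ M) (x₀ : ℤ) (hx₀ : x₀ ∈ A) :
    ∃ m ∈ A, ∀ x ∈ A, x ≤ m :=
  Int.exists_greatest_of_bdd (P := (· ∈ A)) ⟨M, hM⟩ ⟨x₀, hx₀⟩

lemma exists_coord_bound {P : Set (ℤ × ℤ)} (hP : P.Finite) :
    ∃ M : ℤ, ∀ p ∈ P, |p.1| ≤ M ∧ |p.2| ≤ M := by
  obtain ⟨M, hM⟩ := (hP.image fun p : ℤ × ℤ => max |p.1| |p.2|).bddAbove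
  exact ⟨M, fun p hp => max_le_iff.1 (hM ⟨p, hp, rfl⟩)⟩

/-- If `v` is a difference of points of `P` plus a unit vector, then translates of `P` by vectors
differing by `v` touch, in either order. -/
lemma touch {P : Set (ℤ × ℤ)} {v p q : ℤ × ℤ} (hp : p ∈ P) (hq : q ∈ P)
    (h : |p.1 - (q.1 + v.1)| + |p.2 - (q.2 + v.2)| = 1) {s t : ℤ × ℤ}
    (hst : t = s + v ∨ s = t + v) :
    ∃ a ∈ shiftSet P s, ∃ b ∈ shiftSet P t, EdgeAdjacent a b := by
  rcases hst with rfl | rfl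
  · refine ⟨p + s, ⟨p, hp, rfl⟩, q + (s + v), ⟨q, hq, rfl⟩, ?_⟩
    simp only [EdgeAdjacent, Prod.fst_add, Prod.snd_add]
    rw [← h]
    congr 2 <;> ring
  · refine ⟨q + (t + v), ⟨q, hq, rfl⟩, p + t, ⟨p, hp, rfl⟩, ?_⟩
    simp only [EdgeAdjacent, Prod.fst_add, Prod.snd_add]
    rw [← h, abs_sub_comm, abs_sub_comm (q.2 + _)]
    congr 2 <;> ring

theorem polyomino_exists_grid
    (P : Set (ℤ × ℤ)) (hP : IsPolyomino P) :
    ∃ v w : ℤ × ℤ,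
      (∀ i j : ℤ, i • v + j • w = 0 → i = 0 ∧ j = 0) ∧
      (∀ i j k l : ℤ, (i, j) ≠ (k, l) →
        shiftSet P (i • v + j • w) ∩ shiftSet P (k • v + l • w) = ∅) ∧
      ∀ i j k l : ℤ, ((i = k ∧ |j - l| = 1) ∨ (j = l ∧ |i - k| = 1)) →
        ∃ a ∈ shiftSet P (i • v + j • w), ∃ b ∈ shiftSet P (k • v + l • w),
          EdgeAdjacent a b := by
  obtain ⟨hfin, ⟨o, ho⟩, -⟩ := hP
  obtain ⟨M, hM⟩ := exists_coord_bound hfin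
  obtain ⟨y, ⟨p, hp, q, hq, hpq1, hpq2⟩, hy⟩ := exists_greatest
    (A := {y | ∃ p ∈ P, ∃ q ∈ P, p.1 - q.1 = 0 ∧ p.2 - q.2 = y}) (2 * M)
    (by
      rintro y ⟨p, hp, q, hq, -, rfl⟩
      have h1 := abs_le.1 (hM p hp).2
      have h2 := abs_le.1 (hM q hq).2
      linarith)
    0 ⟨o, ho, o, ho, by simp, by simp⟩
  have hy0 : 0 ≤ y := hy 0 ⟨o, ho, o, ho, by simp, by simp⟩
  obtain ⟨x, ⟨p', hp', q', hq', hpq1', k, hpq2'⟩, hx⟩ := exists_greatest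
    (A := {x | ∃ p ∈ P, ∃ q ∈ P, p.1 - q.1 = x ∧ ∃ k : ℤ, p.2 - q.2 = k * (y + 1)}) (2 * M)
    (by
      rintro x ⟨p, hp, q, hq, rfl, -⟩
      have h1 := abs_le.1 (hM p hp).1
      have h2 := abs_le.1 (hM q hq).1
      linarith)
    0 ⟨o, ho, o, ho, by simp, 0, by simp⟩
  have hx0 : 0 ≤ x := hx 0 ⟨o, ho, o, ho, by simp, 0, by simp⟩
  -- No nonzero lattice vector is a difference of points of `P`. Maximality gives `i, j ≤ 0`;
  -- swapping the two points gives the reverse inequalities.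
  have key : ∀ i j : ℤ, ∀ a ∈ P, ∀ b ∈ P, a.1 - b.1 = j * (x + 1) →
      a.2 - b.2 = i * (y + 1) + j * (k * (y + 1)) → i = 0 ∧ j = 0 := by
    have hj : ∀ i j : ℤ, ∀ a ∈ P, ∀ b ∈ P, a.1 - b.1 = j * (x + 1) →
        a.2 - b.2 = i * (y + 1) + j * (k * (y + 1)) → j ≤ 0 := by
      intro i j a ha b hb h1 h2
      have := hx (j * (x + 1)) ⟨a, ha, b, hb, h1, i + j * k, by rw [h2]; ring⟩
      by_contra! hc
      nlinarith
    have hi : ∀ i : ℤ, ∀ a ∈ P, ∀ b ∈ P, a.1 - b.1 = 0 → a.2 - b.2 = i * (y + 1) → i ≤ 0 := by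
      intro i a ha b hb h1 h2
      have := hy (i * (y + 1)) ⟨a, ha, b, hb, h1, h2⟩
      by_contra! hc
      nlinarith
    intro i j a ha b hb h1 h2
    have hj1 := hj i j a ha b hb h1 h2
    have hj2 := hj (-i) (-j) b hb a ha (by linarith) (by linarith)
    obtain rfl : j = 0 := by omega
    have hi1 := hi i a ha b hb (by linarith) (by linarith)
    have hi2 := hi (-i) b hb a ha (by linarith) (by linarith)
    exact ⟨by omega, rfl⟩
  refine ⟨(0, y + 1), (x + 1, k * (y + 1)), ?_, ?_, ?_⟩
  · intro i j h
    simp only [Prod.ext_iff, Prod.fst_add, Prod.snd_add, Prod.smul_fst, Prod.smul_snd,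
      smul_eq_mul, Prod.fst_zero, Prod.snd_zero] at h
    exact key i j o ho o ho (by linarith [h.1]) (by linarith [h.2])
  · intro i j m l hne
    rw [Set.eq_empty_iff_forall_notMem]
    rintro _ ⟨⟨a, ha, rfl⟩, ⟨b, hb, h⟩⟩
    simp only [Prod.ext_iff, Prod.fst_add, Prod.snd_add, Prod.smul_fst, Prod.smul_snd,
      smul_eq_mul] at h
    obtain ⟨h1, h2⟩ := key (m - i) (l - j) a ha b hb (by linarith [h.1]) (by linarith [h.2])
    exact hne (Prod.ext (by simp only; omega) (by simp only; omega))
  · rintro i j m l (⟨rfl, h⟩ | ⟨rfl, h⟩)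
    · refine touch (v := (x + 1, k * (y + 1))) hp' hq' ?_ ?_
      · rw [show p'.1 - (q'.1 + (x + 1)) = -1 by linarith,
          show p'.2 - (q'.2 + k * (y + 1)) = 0 by linarith]
        norm_num
      · rcases (abs_eq zero_le_one).1 h with h | h
        · right; obtain rfl : j = l + 1 := by omega
          module
        · left; obtain rfl : l = j + 1 := by omega
          module
    · refine touch (v := (0, y + 1)) hp hq ?_ ?_
      · rw [show p.1 - (q.1 + 0) = 0 by linarith,
          show p.2 - (q.2 + (y + 1)) = -1 by linarith]
        norm_num
      · rcases (abs_eq zero_le_one).1 h with h | h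
        · right; obtain rfl : i = m + 1 := by omega
          module
        · left; obtain rfl : m = i + 1 := by omega
          module
end

section
/- Let P be a polyomino. Let q be the pixel of P with maximal first coordinate and, among all pixels with that first coordinate, minimal second coordinate (the southernmost pixel of the easternmost column of P); let p be the pixel of P with minimal first coordinate and, among all pixels with that first coordinate, maximal second coordinate (the northernmost pixel of the westernmost column of P). Set u = q − p + (0,−1). Then P ∩ (P + u) = ∅, and p + u = q + (0,−1), so that q ∈ P lies directly above the point q + (0,−1) ∈ P + u; in particular P and P + u are disjoint and edge-adjacent. -/
theorem polyomino_diagonal_shift_one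
    (P : Set (ℤ × ℤ)) (hP : IsPolyomino P)
    (q : ℤ × ℤ) (hq : q ∈ P)
    (hq_east : ∀ a ∈ P, a.1 ≤ q.1)
    (hq_south : ∀ a ∈ P, a.1 = q.1 → q.2 ≤ a.2)
    (p : ℤ × ℤ) (hp : p ∈ P)
    (hp_west : ∀ a ∈ P, p.1 ≤ a.1)
    (hp_north : ∀ a ∈ P, a.1 = p.1 → a.2 ≤ p.2)
    (u : ℤ × ℤ) (hu : u = q - p + (0, -1)) :
    P ∩ shiftSet P u = ∅ ∧
      p + u = q + (0, -1) ∧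
      q + (0, -1) ∈ shiftSet P u ∧
      EdgeAdjacent q (q + (0, -1)) := by
  subst hu
  have hpu : p + (q - p + (0, -1)) = q + (0, -1) := by abel
  refine ⟨?_, hpu, ⟨p, hp, hpu⟩, by simp [EdgeAdjacent]⟩
  rw [Set.eq_empty_iff_forall_notMem]
  rintro _ ⟨hx, a, ha, rfl⟩
  have h1 := hq_east _ hx
  have h2 := hq_south _ hx
  have h3 := hp_west a ha
  have h4 := hp_north a ha
  simp only [Prod.fst_add, Prod.snd_add, Prod.fst_sub, Prod.snd_sub] at h1 h2 h3 h4
  -- The shift moves `P` east by its full width, so `a` is in the westernmost column.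
  have h5 : a.1 = p.1 := by omega
  have h6 := h4 h5
  have h7 := h2 (by omega)
  omega
end

section
/- Let P be a polyomino. Let r be the pixel of P with maximal first coordinate and, among all pixels with that first coordinate, maximal second coordinate (the northernmost pixel of the easternmost column of P); let s be the pixel of P with minimal first coordinate and, among all pixels with that first coordinate, minimal second coordinate (the southernmost pixel of the westernmost column of P). Set t = s − r + (0,−1). Then P ∩ (P + t) = ∅, and r + t = s + (0,−1), so that s ∈ P lies directly above the point s + (0,−1) ∈ P + t; in particular P and P + t are disjoint and edge-adjacent. -/
theorem polyomino_diagonal_shift_two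
    (P : Set (ℤ × ℤ)) (hP : IsPolyomino P)
    (r : ℤ × ℤ) (hr : r ∈ P)
    (hr_east : ∀ a ∈ P, a.1 ≤ r.1)
    (hr_north : ∀ a ∈ P, a.1 = r.1 → a.2 ≤ r.2)
    (s : ℤ × ℤ) (hs : s ∈ P)
    (hs_west : ∀ a ∈ P, s.1 ≤ a.1)
    (hs_south : ∀ a ∈ P, a.1 = s.1 → s.2 ≤ a.2)
    (t : ℤ × ℤ) (ht : t = s - r + (0, -1)) :
    P ∩ shiftSet P t = ∅ ∧
      r + t = s + (0, -1) ∧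
      s + (0, -1) ∈ shiftSet P t ∧
      EdgeAdjacent s (s + (0, -1)) := by
  have h_shift : r + t = s + (0, -1) := by rw [ht]; abel
  refine ⟨?_, h_shift, ⟨r, hr, h_shift⟩, by simp [EdgeAdjacent]⟩
  rw [Set.eq_empty_iff_forall_notMem]
  rintro a ⟨ha, b, hb, hba⟩
  have h_fst : b.1 + t.1 = a.1 := congrArg Prod.fst hba
  have h_snd : b.2 + t.2 = a.2 := congrArg Prod.snd hba
  have ht_fst : r.1 + t.1 = s.1 + 0 := congrArg Prod.fst h_shift
  have ht_snd : r.2 + t.2 = s.2 + -1 := congrArg Prod.snd h_shift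
  have h_east := hr_east b hb
  have h_west := hs_west a ha
  have h_north := hr_north b hb (by lia)
  have h_south := hs_south a ha (by lia)
  lia
end

section
/- Let P ⊆ ℤ² be a finite nonempty set, let u ∈ ℤ², and let e ∈ {(1,0), (−1,0), (0,1), (0,−1)} be a unit vector. Suppose the set K = { k ∈ ℤ : P ∩ (P + u + k·e) ≠ ∅ } is nonempty. Then K is finite, and letting k₀ be the maximum of K, one has P ∩ (P + u + (k₀+1)·e) = ∅ and there exists a ∈ P with a + e ∈ P + u + (k₀+1)·e; in particular P and P + u + (k₀+1)·e are disjoint and edge-adjacent. -/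
theorem sliding_until_adjacent
    (P : Set (ℤ × ℤ)) (hfin : P.Finite) (hne : P.Nonempty)
    (u : ℤ × ℤ) (e : ℤ × ℤ)
    (he : e ∈ ({((1 : ℤ), (0 : ℤ)), (-1, 0), (0, 1), (0, -1)} : Set (ℤ × ℤ)))
    (K : Set ℤ) (hK : K = {k : ℤ | (P ∩ shiftSet P (u + k • e)).Nonempty})
    (hKne : K.Nonempty) :
    K.Finite ∧
      ∃ k₀ : ℤ, IsGreatest K k₀ ∧
        P ∩ shiftSet P (u + (k₀ + 1) • e) = ∅ ∧
        ∃ a ∈ P, a + e ∈ shiftSet P (u + (k₀ + 1) • e) := by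
  subst hK
  have he0 : e ≠ 0 := by
    rintro rfl
    simp [Prod.ext_iff] at he
  have hinj : Function.Injective (fun k : ℤ => u + k • e) :=
    (add_right_injective u).comp (smul_left_injective ℤ he0)
  have hKfin : {k : ℤ | (P ∩ shiftSet P (u + k • e)).Nonempty}.Finite := by
    refine ((hfin.image2 (fun a b => a - b) hfin).preimage hinj.injOn).subset ?_
    rintro k ⟨a, ha, b, hb, hab⟩
    exact ⟨a, ha, b, hb, sub_eq_of_eq_add' hab.symm⟩
  refine ⟨hKfin, ?_⟩
  obtain ⟨k₀, hk₀, hmax⟩ := Set.exists_max_image _ id hKfin hKne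
  refine ⟨k₀, ⟨hk₀, hmax⟩, ?_, ?_⟩
  · rw [← Set.not_nonempty_iff_eq_empty]
    intro h
    have h_le : k₀ + 1 ≤ k₀ := hmax (k₀ + 1) h
    omega
  · obtain ⟨a, ha, b, hb, hab⟩ := hk₀
    have hab' : b + (u + k₀ • e) = a := hab
    refine ⟨a, ha, b, hb, ?_⟩
    change b + (u + (k₀ + 1) • e) = a + e
    rw [← hab', add_smul, one_smul]
    abel
end

section
/- Let P be a polyomino with |P| ≥ 3 such that any two pixels of P lying in the same row have first coordinates differing by at most 1, and any two pixels of P lying in the same column have second coordinates differing by at most 1. Then either (a) P is a translate of the 2×2 square {(0,0), (1,0), (0,1), (1,1)}, or (b) P is a zig-zag (staircase): there exist ε ∈ {1, −1}, δ ∈ {0, 1}, and an enumeration p₀, p₁, …, p_{n−1} of all pixels of P (n = |P|) such that for every 0 ≤ k < n−1, p_{k+1} − p_k equals (0,1) if k + δ is even and equals (ε,0) if k + δ is odd. -/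
/-- The `k`-th pixel of the infinite staircase that starts at `p` and moves alternately by `(0, 1)`
and `(ε, 0)`, with the vertical step first if `δ = 0` and the horizontal step first if `δ = 1`.
The closed form counts the horizontal and vertical steps among the first `k`; it is meant for
`δ ≤ 1`, where the natural subtraction does not truncate. -/
def stair (p : ℤ × ℤ) (ε : ℤ) (δ k : ℕ) : ℤ × ℤ :=
  (p.1 + ε * (((k + δ) / 2 : ℕ) : ℤ), p.2 + (((k + 1 - δ) / 2 : ℕ) : ℤ))

theorem stair_step (p : ℤ × ℤ) (ε : ℤ) (δ k : ℕ) (hδ : δ ≤ 1) :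
    stair p ε δ (k + 1) - stair p ε δ k
      = if Even (k + δ) then ((0 : ℤ), (1 : ℤ)) else (ε, 0) := by
  split_ifs with h
  · rw [Nat.even_iff] at h
    have h1 : (k + 1 + δ) / 2 = (k + δ) / 2 := by omega
    have h2 : (k + 1 + 1 - δ) / 2 = (k + 1 - δ) / 2 + 1 := by omega
    ext <;> simp [stair, h1, h2]
  · rw [Nat.even_iff] at h
    have h1 : (k + 1 + δ) / 2 = (k + δ) / 2 + 1 := by omega
    have h2 : (k + 1 + 1 - δ) / 2 = (k + 1 - δ) / 2 := by omega
    ext <;> simp [stair, h1, h2, mul_add]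

/-- The functional `(x, y) ↦ ε x + y` grows by one at every step. -/
theorem stair_inj {p : ℤ × ℤ} {ε : ℤ} (hε : ε = 1 ∨ ε = -1) {δ : ℕ} (hδ : δ ≤ 1) {j k : ℕ}
    (h : stair p ε δ j = stair p ε δ k) : j = k := by
  simp only [stair, Prod.mk.injEq] at h
  obtain ⟨h1, h2⟩ := h
  rcases hε with rfl | rfl <;> omega

/-- A nonempty subset of a polyomino that is closed under adjacency is the whole set. -/
theorem subset_of_closed {P S : Set (ℤ × ℤ)} (hP : IsPolyomino P) (hSP : S ⊆ P)
    (hne : S.Nonempty)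
    (h : ∀ x y, (x, y) ∈ S →
      ((x + 1, y) ∈ P → (x + 1, y) ∈ S) ∧ ((x - 1, y) ∈ P → (x - 1, y) ∈ S) ∧
      ((x, y + 1) ∈ P → (x, y + 1) ∈ S) ∧ ((x, y - 1) ∈ P → (x, y - 1) ∈ S)) :
    P ⊆ S := by
  obtain ⟨a, ha⟩ := hne
  intro b hb
  obtain ⟨n, f, h0, hn, hin, hstep⟩ := hP.2.2 a (hSP ha) b hb
  have key : ∀ i ≤ n, f i ∈ S := by
    intro i
    induction i with
    | zero => intro _; rwa [h0]
    | succ i ih =>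
      intro hi
      have hS := ih (by omega)
      have hp := hin (i + 1) hi
      have hs := hstep i (by omega)
      obtain ⟨h1, h2, h3, h4⟩ := h (f i).1 (f i).2 hS
      simp only [Set.mem_insert_iff, Set.mem_singleton_iff, Prod.ext_iff, Prod.fst_sub,
        Prod.snd_sub] at hs
      rcases hs with hs | hs | hs | hs
      · rw [show f (i + 1) = ((f i).1 + 1, (f i).2) by ext <;> simp <;> omega] at hp ⊢
        exact h1 hp
      · rw [show f (i + 1) = ((f i).1 - 1, (f i).2) by ext <;> simp <;> omega] at hp ⊢
        exact h2 hp
      · rw [show f (i + 1) = ((f i).1, (f i).2 + 1) by ext <;> simp <;> omega] at hp ⊢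
        exact h3 hp
      · rw [show f (i + 1) = ((f i).1, (f i).2 - 1) by ext <;> simp <;> omega] at hp ⊢
        exact h4 hp
  exact hn ▸ key n le_rfl

/-- A polyomino with thin rows and columns that contains a 2×2 square equals that square. -/
theorem eq_square {P : Set (ℤ × ℤ)} (hP : IsPolyomino P)
    (hr : ∀ x x' y, (x, y) ∈ P → (x', y) ∈ P → x' ≤ x + 1)
    (hc : ∀ x y y', (x, y) ∈ P → (x, y') ∈ P → y' ≤ y + 1)
    {x y : ℤ} (h1 : (x, y) ∈ P) (h2 : (x + 1, y) ∈ P) (h3 : (x, y + 1) ∈ P)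
    (h4 : (x + 1, y + 1) ∈ P) :
    ∃ t : ℤ × ℤ, P = shiftSet ({(0, 0), (1, 0), (0, 1), (1, 1)} : Set (ℤ × ℤ)) t := by
  refine ⟨(x, y), ?_⟩
  have hmem : ∀ u v : ℤ,
      (u, v) ∈ shiftSet ({(0, 0), (1, 0), (0, 1), (1, 1)} : Set (ℤ × ℤ)) (x, y) ↔
        (u = x ∨ u = x + 1) ∧ (v = y ∨ v = y + 1) := by
    intro u v
    simp only [shiftSet, Set.image_insert_eq, Set.image_singleton, Set.mem_insert_iff,
      Set.mem_singleton_iff, Prod.mk_add_mk, Prod.mk.injEq]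
    omega
  have hsub : shiftSet ({(0, 0), (1, 0), (0, 1), (1, 1)} : Set (ℤ × ℤ)) (x, y) ⊆ P := by
    rintro ⟨u, v⟩ huv
    obtain ⟨rfl | rfl, rfl | rfl⟩ := (hmem u v).1 huv <;> assumption
  refine Set.Subset.antisymm (subset_of_closed hP hsub ⟨(x, y), (hmem x y).2 (by simp)⟩ ?_) hsub
  intro u v huv
  have hrow : ∀ w, (w, v) ∈ P → w = x ∨ w = x + 1 := by
    intro w hw
    obtain ⟨-, rfl | rfl⟩ := (hmem u v).1 huv
    · have := hr _ _ _ h1 hw; have := hr _ _ _ hw h2; omega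
    · have := hr _ _ _ h3 hw; have := hr _ _ _ hw h4; omega
  have hcol : ∀ w, (u, w) ∈ P → w = y ∨ w = y + 1 := by
    intro w hw
    obtain ⟨rfl | rfl, -⟩ := (hmem u v).1 huv
    · have := hc _ _ _ h1 hw; have := hc _ _ _ hw h3; omega
    · have := hc _ _ _ h2 hw; have := hc _ _ _ hw h4; omega
  have huv' := (hmem u v).1 huv
  exact ⟨fun h => (hmem _ _).2 ⟨hrow _ h, huv'.2⟩, fun h => (hmem _ _).2 ⟨hrow _ h, huv'.2⟩,
    fun h => (hmem _ _).2 ⟨huv'.1, hcol _ h⟩, fun h => (hmem _ _).2 ⟨huv'.1, hcol _ h⟩⟩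

/-- If no pixel had both a horizontal and a vertical neighbour, a pixel together with its only
neighbour would be closed under adjacency. -/
theorem exists_corner {P : Set (ℤ × ℤ)} (hP : IsPolyomino P) (hcard : 3 ≤ P.ncard)
    (hr : ∀ x x' y, (x, y) ∈ P → (x', y) ∈ P → x' ≤ x + 1)
    (hc : ∀ x y y', (x, y) ∈ P → (x, y') ∈ P → y' ≤ y + 1) :
    ∃ x y s t : ℤ, (s = 1 ∨ s = -1) ∧ (t = 1 ∨ t = -1) ∧
      (x, y) ∈ P ∧ (x + s, y) ∈ P ∧ (x, y + t) ∈ P := by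
  by_contra hno
  have hno' : ∀ x y x' y', (x, y) ∈ P → (x', y) ∈ P → (x, y') ∈ P →
      (x' = x + 1 ∨ x' = x - 1) → (y' = y + 1 ∨ y' = y - 1) → False := by
    intro x y x' y' h h1 h2 hx hy
    exact hno ⟨x, y, x' - x, y' - y, by omega, by omega, h, by simpa using h1, by simpa using h2⟩
  have hsmall : ∀ a b : ℤ × ℤ, ¬ P ⊆ {a, b} := by
    intro a b h
    have h1 := Set.ncard_le_ncard h (Set.toFinite _)
    have h2 := Set.ncard_insert_le a {b}
    rw [Set.ncard_singleton] at h2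
    omega
  obtain ⟨⟨x, y⟩, ha⟩ := hP.2.1
  have hclosed : ∀ x' y', (x', y') ∈ P →
      ((y' = y ∧ (x' = x + 1 ∨ x' = x - 1)) ∨ (x' = x ∧ (y' = y + 1 ∨ y' = y - 1))) → False := by
    intro x' y' hb hadj
    refine hsmall (x, y) (x', y') (subset_of_closed hP ?_ ⟨(x, y), by simp⟩ ?_)
    · rintro c (rfl | rfl) <;> assumption
    intro u v huv
    have hu : (u, v) ∈ P := by
      rcases huv with h | h <;> rw [h] <;> assumption
    simp only [Set.mem_insert_iff, Set.mem_singleton_iff, Prod.mk.injEq] at huv ⊢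
    rcases hadj with ⟨rfl, hx⟩ | ⟨rfl, hy⟩
    · have hv : v = y' := by omega
      subst hv
      refine ⟨fun h => ?_, fun h => ?_, fun h => ?_, fun h => ?_⟩
      · have := hr _ _ _ ha h; have := hr _ _ _ hb h
        have := hr _ _ _ h ha; have := hr _ _ _ h hb; omega
      · have := hr _ _ _ ha h; have := hr _ _ _ hb h
        have := hr _ _ _ h ha; have := hr _ _ _ h hb; omega
      · exfalso
        rcases huv with ⟨rfl, -⟩ | ⟨rfl, -⟩
        · exact hno' _ _ _ _ ha hb h hx (by omega)
        · exact hno' _ _ _ _ hb ha h (by omega) (by omega)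
      · exfalso
        rcases huv with ⟨rfl, -⟩ | ⟨rfl, -⟩
        · exact hno' _ _ _ _ ha hb h hx (by omega)
        · exact hno' _ _ _ _ hb ha h (by omega) (by omega)
    · have hv : u = x' := by omega
      subst hv
      refine ⟨fun h => ?_, fun h => ?_, fun h => ?_, fun h => ?_⟩
      · exfalso
        rcases huv with ⟨-, rfl⟩ | ⟨-, rfl⟩
        · exact hno' _ _ _ _ ha h hb (by omega) hy
        · exact hno' _ _ _ _ hb h ha (by omega) (by omega)
      · exfalso
        rcases huv with ⟨-, rfl⟩ | ⟨-, rfl⟩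
        · exact hno' _ _ _ _ ha h hb (by omega) hy
        · exact hno' _ _ _ _ hb h ha (by omega) (by omega)
      · have := hc _ _ _ ha h; have := hc _ _ _ hb h
        have := hc _ _ _ h ha; have := hc _ _ _ h hb; omega
      · have := hc _ _ _ ha h; have := hc _ _ _ hb h
        have := hc _ _ _ h ha; have := hc _ _ _ h hb; omega
  -- So `(x, y)` has no neighbour at all, and `P` is the singleton `{(x, y)}`.
  refine hsmall (x, y) (x, y) (subset_of_closed hP ?_ ⟨(x, y), by simp⟩ ?_)
  · rintro c (rfl | rfl) <;> assumption
  intro u v huv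
  simp only [Set.mem_insert_iff, Set.mem_singleton_iff, Prod.mk.injEq, or_self] at huv
  obtain ⟨rfl, rfl⟩ := huv
  exact ⟨fun h => (hclosed _ _ h (by omega)).elim, fun h => (hclosed _ _ h (by omega)).elim,
    fun h => (hclosed _ _ h (by omega)).elim, fun h => (hclosed _ _ h (by omega)).elim⟩

/-- `P` contains the first `n` pixels of some staircase. -/
def HasStair (P : Set (ℤ × ℤ)) (n : ℕ) : Prop :=
  ∃ (p : ℤ × ℤ) (ε : ℤ) (δ : ℕ), (ε = 1 ∨ ε = -1) ∧ δ ≤ 1 ∧ ∀ k < n, stair p ε δ k ∈ P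

theorem hasStair_le {P : Set (ℤ × ℤ)} (hfin : P.Finite) {n : ℕ} (h : HasStair P n) :
    n ≤ P.ncard := by
  obtain ⟨p, ε, δ, hε, hδ, hk⟩ := h
  have h1 : (stair p ε δ '' (Set.Iio n)).ncard = n := by
    rw [Set.ncard_image_of_injective _ fun j k h => stair_inj hε hδ h]
    simp [Set.ncard_eq_toFinset_card']
  rw [← h1]
  refine Set.ncard_le_ncard ?_ hfin
  rintro _ ⟨k, hkn, rfl⟩
  exact hk k hkn

theorem hasStair_three {P : Set (ℤ × ℤ)} {x y s t : ℤ} (hs : s = 1 ∨ s = -1)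
    (ht : t = 1 ∨ t = -1) (h0 : (x, y) ∈ P) (h1 : (x + s, y) ∈ P) (h2 : (x, y + t) ∈ P) :
    HasStair P 3 := by
  rcases ht with rfl | rfl
  · -- The staircase enters the corner horizontally and leaves it upwards.
    refine ⟨(x + s, y), -s, 1, by omega, le_rfl, fun k hk => ?_⟩
    interval_cases k <;> simpa [stair]
  · -- The staircase enters the corner from below and leaves it horizontally.
    refine ⟨(x, y + -1), s, 0, hs, by omega, fun k hk => ?_⟩
    interval_cases k <;> simpa [stair]

/-- Prolonging a staircase backwards by one pixel switches `δ`. -/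
theorem hasStair_back {P : Set (ℤ × ℤ)} {p : ℤ × ℤ} {ε : ℤ} {δ n : ℕ}
    (hε : ε = 1 ∨ ε = -1) (hδ : δ ≤ 1) (hk : ∀ k < n, stair p ε δ k ∈ P)
    (h : (p.1 - ε * (1 - δ), p.2 - δ) ∈ P) : HasStair P (n + 1) := by
  refine ⟨(p.1 - ε * (1 - δ), p.2 - δ), ε, 1 - δ, hε, by omega, fun k hkn => ?_⟩
  cases k with
  | zero =>
    convert h using 1
    interval_cases δ <;> simp [stair]
  | succ k =>
    convert hk k (by omega) using 1
    interval_cases δ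
    · have e : (k + 1 + 1) / 2 = k / 2 + 1 := by omega
      ext <;> simp [stair, e]; ring
    · have e : (k + 1 + 1) / 2 = k / 2 + 1 := by omega
      ext <;> simp [stair, e]

theorem thin_polyomino_classification
    (P : Set (ℤ × ℤ)) (hP : IsPolyomino P) (hcard : 3 ≤ P.ncard)
    (hrow : ∀ a ∈ P, ∀ b ∈ P, a.2 = b.2 → |a.1 - b.1| ≤ 1)
    (hcol : ∀ a ∈ P, ∀ b ∈ P, a.1 = b.1 → |a.2 - b.2| ≤ 1) :
    (∃ t : ℤ × ℤ,
        P = shiftSet ({(0, 0), (1, 0), (0, 1), (1, 1)} : Set (ℤ × ℤ)) t) ∨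
      (∃ ε : ℤ, (ε = 1 ∨ ε = -1) ∧ ∃ δ : ℕ, δ ≤ 1 ∧ ∃ f : ℕ → ℤ × ℤ,
        (∀ k < P.ncard, f k ∈ P) ∧
        (∀ a ∈ P, ∃ k < P.ncard, f k = a) ∧
        (∀ j < P.ncard, ∀ k < P.ncard, f j = f k → j = k) ∧
        ∀ k : ℕ, k + 1 < P.ncard →
          f (k + 1) - f k = if Even (k + δ) then ((0 : ℤ), (1 : ℤ)) else (ε, 0)) := by
  have hr : ∀ x x' y, (x, y) ∈ P → (x', y) ∈ P → x' ≤ x + 1 := by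
    intro x x' y h h'
    have := abs_le.1 (hrow _ h _ h' rfl)
    simp only at this
    omega
  have hc : ∀ x y y', (x, y) ∈ P → (x, y') ∈ P → y' ≤ y + 1 := by
    intro x y y' h h'
    have := abs_le.1 (hcol _ h _ h' rfl)
    simp only at this
    omega
  by_cases hsquare : ∃ t : ℤ × ℤ,
      P = shiftSet ({(0, 0), (1, 0), (0, 1), (1, 1)} : Set (ℤ × ℤ)) t
  · exact Or.inl hsquare
  right
  obtain ⟨n, hn3, ⟨p, ε, δ, hε, hδ, hk⟩, hmax⟩ :
      ∃ n, 3 ≤ n ∧ HasStair P n ∧ ¬ HasStair P (n + 1) := by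
    by_contra! hcon
    obtain ⟨x, y, s, t, hs, ht, h0, h1, h2⟩ := exists_corner hP hcard hr hc
    have hall : ∀ m, 3 ≤ m → HasStair P m := fun m hm =>
      Nat.le_induction (hasStair_three hs ht h0 h1 h2) hcon m hm
    have := hasStair_le hP.1 (hall (P.ncard + 1) (by omega))
    omega
  have hsq : ∀ x y, (x, y) ∈ P → (x + ε, y) ∈ P → (x, y + 1) ∈ P → (x + ε, y + 1) ∈ P →
      False := by
    intro x y h1 h2 h3 h4
    rcases hε with rfl | rfl
    · exact hsquare (eq_square hP hr hc h1 h2 h3 h4)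
    · exact hsquare (eq_square (x := x + -1) hP hr hc h2 (by simpa using h1) h4
        (by simpa using h3))
  have hext : ∀ k < n, stair p ε δ (k + 1) ∈ P → k + 1 < n := by
    intro k hkn h
    by_contra hge
    refine hmax ⟨p, ε, δ, hε, hδ, fun j hj => ?_⟩
    rcases Nat.lt_succ_iff_lt_or_eq.1 hj with hj | rfl
    · exact hk j hj
    · rwa [show j = k + 1 by omega]
  have hback : (p.1 - ε * (1 - δ), p.2 - δ) ∉ P := fun h => hmax (hasStair_back hε hδ hk h)
  have hzero : stair p ε δ 0 = p := by
    interval_cases δ <;> simp [stair]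
  have hup : ∀ k x y, stair p ε δ k = (x, y) → Even (k + δ) →
      stair p ε δ (k + 1) = (x, y + 1) := by
    intro k x y h he
    have := stair_step p ε δ k hδ
    rw [if_pos he, h, sub_eq_iff_eq_add] at this
    rw [this]; ext <;> simp [add_comm]
  have hside : ∀ k x y, stair p ε δ k = (x, y) → ¬ Even (k + δ) →
      stair p ε δ (k + 1) = (x + ε, y) := by
    intro k x y h he
    have := stair_step p ε δ k hδ
    rw [if_neg he, h, sub_eq_iff_eq_add] at this
    rw [this]; ext <;> simp [add_comm]
  have hdown : ∀ k x y, stair p ε δ (k + 1) = (x, y) → Even (k + δ) →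
      stair p ε δ k = (x, y - 1) := by
    intro k x y h he
    have := hup k (stair p ε δ k).1 (stair p ε δ k).2 rfl he
    rw [h, Prod.mk.injEq] at this
    ext <;> simp [this]
  have hunside : ∀ k x y, stair p ε δ (k + 1) = (x, y) → ¬ Even (k + δ) →
      stair p ε δ k = (x - ε, y) := by
    intro k x y h he
    have := hside k (stair p ε δ k).1 (stair p ε δ k).2 rfl he
    rw [h, Prod.mk.injEq] at this
    ext <;> simp [this]
  have hsucc : ∀ k, Even (k + 1 + δ) ↔ ¬ Even (k + δ) := by
    intro k
    rw [← Nat.even_add_one, show k + δ + 1 = k + 1 + δ by omega]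
  have hclosed : ∀ x y, (x, y) ∈ stair p ε δ '' Set.Iio n →
      ((x + ε, y) ∈ P → (x + ε, y) ∈ stair p ε δ '' Set.Iio n) ∧
      ((x - ε, y) ∈ P → (x - ε, y) ∈ stair p ε δ '' Set.Iio n) ∧
      ((x, y + 1) ∈ P → (x, y + 1) ∈ stair p ε δ '' Set.Iio n) ∧
      ((x, y - 1) ∈ P → (x, y - 1) ∈ stair p ε δ '' Set.Iio n) := by
    rintro x y ⟨k, hkn, hxy⟩
    have hkn : k < n := hkn
    have hxyP : (x, y) ∈ P := hxy ▸ hk k hkn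
    by_cases he : Even (k + δ)
    · have hs := hup k x y hxy he
      refine ⟨fun h => ?_, fun h => ?_, fun h => ?_, fun h => ?_⟩
      · exfalso
        rcases k with - | j
        · -- The first pixel closes a square with the second and the third.
          have hs' := hside _ _ _ hs (by rw [hsucc]; simpa using he)
          exact hsq x y hxyP h (hs ▸ hk 1 (by omega)) (hs' ▸ hk 2 (by omega))
        · have hp := hunside j x y hxy ((hsucc j).1 he)
          have hpP := hp ▸ hk j (by omega)
          have := hr _ _ _ hpP h; have := hr _ _ _ h hpP; omega
      · rcases k with - | j
        · rw [hzero] at hxy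
          have hδ0 : δ = 0 := by
            interval_cases δ
            · rfl
            · simp at he
          subst hδ0
          exact absurd (by simpa [hxy] using h) hback
        · exact ⟨j, Set.mem_Iio.2 (by omega), hunside j x y hxy ((hsucc j).1 he)⟩
      · exact ⟨k + 1, hext k hkn (hs ▸ h), hs⟩
      · exfalso
        by_cases hlt : k + 1 < n
        · have := hc _ _ _ h (hs ▸ hk (k + 1) hlt); omega
        · -- The last pixel closes a square with the two before it.
          obtain ⟨j, rfl⟩ : ∃ j, k = j + 2 := ⟨k - 2, by omega⟩
          have h1 := hunside (j + 1) x y hxy ((hsucc _).1 he)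
          have h2 := hdown j _ _ h1 (by simpa [hsucc] using he)
          exact hsq (x - ε) (y - 1) (h2 ▸ hk j (by omega)) (by simpa using h)
            (by simpa using h1 ▸ hk (j + 1) (by omega)) (by simpa using hxyP)
    · have hs := hside k x y hxy he
      refine ⟨fun h => ?_, fun h => ?_, fun h => ?_, fun h => ?_⟩
      · exact ⟨k + 1, hext k hkn (hs ▸ h), hs⟩
      · exfalso
        by_cases hlt : k + 1 < n
        · have hsP := hs ▸ hk (k + 1) hlt
          have := hr _ _ _ h hsP; have := hr _ _ _ hsP h; omega
        · -- The last pixel closes a square with the two before it.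
          obtain ⟨j, rfl⟩ : ∃ j, k = j + 2 := ⟨k - 2, by omega⟩
          have h1 := hdown (j + 1) x y hxy (by simpa [hsucc] using he)
          have h2 := hunside j _ _ h1 (by simpa [hsucc] using he)
          exact hsq (x - ε) (y - 1) (h2 ▸ hk j (by omega))
            (by simpa using h1 ▸ hk (j + 1) (by omega)) (by simpa using h) (by simpa using hxyP)
      · exfalso
        rcases k with - | j
        · -- The first pixel closes a square with the second and the third.
          have hs' := hup _ _ _ hs (by rw [hsucc]; exact he)
          exact hsq x y hxyP (hs ▸ hk 1 (by omega)) h (hs' ▸ hk 2 (by omega))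
        · have hp := hdown j x y hxy (by simpa [hsucc] using he)
          have hpP := hp ▸ hk j (by omega)
          have := hc _ _ _ hpP h; omega
      · rcases k with - | j
        · rw [hzero] at hxy
          have hδ1 : δ = 1 := by
            interval_cases δ
            · simp at he
            · rfl
          subst hδ1
          exact absurd (by simpa [hxy] using h) hback
        · exact ⟨j, Set.mem_Iio.2 (by omega),
            hdown j x y hxy (by simpa [hsucc] using he)⟩
  have hsub : stair p ε δ '' Set.Iio n ⊆ P := by
    rintro _ ⟨k, hkn, rfl⟩
    exact hk k hkn
  have hPS : P ⊆ stair p ε δ '' Set.Iio n := by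
    refine subset_of_closed hP hsub ⟨_, 0, Set.mem_Iio.2 (by omega), rfl⟩ fun x y hxy => ?_
    obtain ⟨h1, h2, h3, h4⟩ := hclosed x y hxy
    rcases hε with rfl | rfl
    · exact ⟨h1, h2, h3, h4⟩
    · rw [sub_neg_eq_add] at h2
      exact ⟨h2, h1, h3, h4⟩
  have hcardn : P.ncard = n := by
    rw [Set.Subset.antisymm hPS hsub,
      Set.ncard_image_of_injective _ fun j k h => stair_inj hε hδ h]
    simp [Set.ncard_eq_toFinset_card']
  rw [hcardn]
  exact ⟨ε, hε, δ, hδ, stair p ε δ, hk, fun a ha => hPS ha,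
    fun j _ k _ h => stair_inj hε hδ h, fun k _ => stair_step p ε δ k hδ⟩
end
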